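/- For every μ ∈ ℂ with Re μ > 0 and Im μ > 0, there exists a C^∞ shear profile V_s : [0,∞) → ℝ with V_s(0) = 0, V_s'(z) > 0 for all z ≥ 0, and V_s(z) − z converging rapidly (together with all derivatives of V_s − z) to some constant A_s as z → ∞, such that Φ_∞(μ) = 0, where Φ_∞(μ) := μ ∫₀^∞ (μ − V_s(y))^{−2} dy. In other words, for every complex number in the open first quadrant there is an admissible shear flow for which it is an infinite-frequency eigenvalue. -/

import Mathlib

open MeasureTheory Filter

/-!
Parametrise the flow by its height `y = Y(v)` as a function of the velocity `v = V_s(y)`, with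
`Y' = 1 + h`, where `h ≥ 0` is smooth and compactly supported in `(0, ∞)`. The substitution
`y = Y(v)` gives `Φ_∞(μ) = μ ∫₀^∞ (1 + h(v)) (μ - v)⁻² dv = -1 + μ ∫₀^∞ h(v) (μ - v)⁻² dv`, so one
needs a density `h` with `∫ h(v) (μ - v)⁻² dv = μ⁻¹`. If there were none, a nonzero real linear
functional `ℓ` on `ℂ` would separate `μ⁻¹` from the convex cone of all such integrals, so that
`ℓ ((μ - v)⁻²) ≥ 0` for all `v > 0` and `ℓ (μ⁻¹) ≤ 0`. The velocities `v = Re μ / 2` and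
`v = 2 |μ|² / Re μ`, on either side of `v = |μ|`, suffice to refute this.
-/

open Set
open scoped ContDiff Topology

section Separation

variable {E : Type*} [NormedAddCommGroup E] [NormedSpace ℝ E] [FiniteDimensional ℝ E]

lemma exists_dual_ne_zero_forall_apply_eq {A : Set E} (hne : A.Nonempty)
    (hA : affineSpan ℝ A ≠ ⊤) :
    ∃ ℓ : E →L[ℝ] ℝ, ℓ ≠ 0 ∧ ∀ a ∈ A, ∀ b ∈ A, ℓ a = ℓ b := by
  rw [Ne, AffineSubspace.affineSpan_eq_top_iff_vectorSpan_eq_top_of_nonempty ℝ E E hne] at hA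
  obtain ⟨φ, hφ, hker⟩ := Submodule.exists_le_ker_of_lt_top _ (lt_top_iff_ne_top.2 hA)
  refine ⟨φ.toContinuousLinearMap, by simpa using hφ, fun a ha b hb => ?_⟩
  have hab : φ (a - b) = 0 := hker (vsub_mem_vectorSpan ℝ ha hb)
  simpa [sub_eq_zero] using hab

theorem exists_dual_le_of_convex_of_notMem {A : Set E} (hA : Convex ℝ A) (hne : A.Nonempty) {x : E}
    (hx : x ∉ A) : ∃ ℓ : E →L[ℝ] ℝ, ℓ ≠ 0 ∧ ∀ a ∈ A, ℓ a ≤ ℓ x := by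
  by_cases hInt : (interior A).Nonempty
  · exact geometric_hahn_banach_of_nonempty_interior_point hA (fun h => hx (interior_subset h)) hInt
  · rw [hA.interior_nonempty_iff_affineSpan_eq_top] at hInt
    obtain ⟨ℓ, hℓ, hconst⟩ := exists_dual_ne_zero_forall_apply_eq hne hInt
    obtain ⟨a₀, ha₀⟩ := hne
    rcases le_total (ℓ a₀) (ℓ x) with h | h
    · exact ⟨ℓ, hℓ, fun a ha => (hconst a ha a₀ ha₀).trans_le h⟩
    · refine ⟨-ℓ, neg_ne_zero.2 hℓ, fun a ha => ?_⟩
      simpa [hconst a ha a₀ ha₀] using h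

theorem exists_dual_nonneg_of_notMem_pointedCone {C : PointedCone ℝ E} {x : E} (hx : x ∉ C) :
    ∃ ℓ : E →L[ℝ] ℝ, ℓ ≠ 0 ∧ (∀ c ∈ C, 0 ≤ ℓ c) ∧ ℓ x ≤ 0 := by
  obtain ⟨ℓ, hℓ, hle⟩ := exists_dual_le_of_convex_of_notMem C.convex ⟨0, C.zero_mem⟩ hx
  have hx0 : 0 ≤ ℓ x := by simpa using hle 0 C.zero_mem
  refine ⟨-ℓ, neg_ne_zero.2 hℓ, fun c hc => ?_, by simpa using hx0⟩
  rw [neg_apply, Left.nonneg_neg_iff]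
  by_contra! hpos
  -- A multiple of `c` would exceed the bound `ℓ x`.
  have hmul := hle _ (C.smul_mem (r := (ℓ x + 1) / ℓ c) (by positivity) hc)
  rw [map_smul, smul_eq_mul, div_mul_cancel₀ _ hpos.ne'] at hmul
  linarith

end Separation

section Density

variable {G E : Type*} [NormedAddCommGroup G] [NormedSpace ℝ G]
  [NormedAddCommGroup E] [NormedSpace ℝ E] {U : Set G} {f : G → E} {φ ψ : G → ℝ}

/-- Nonnegative test functions on `U`: smooth nonnegative functions on the whole space whose
support is compact and contained in `U`. -/
structure IsSmoothDensityOn (U : Set G) (φ : G → ℝ) : Prop where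
  contDiff : ContDiff ℝ ∞ φ
  nonneg : ∀ x, 0 ≤ φ x
  hasCompactSupport : HasCompactSupport φ
  tsupport_subset : tsupport φ ⊆ U

namespace IsSmoothDensityOn

lemma zero : IsSmoothDensityOn U (0 : G → ℝ) where
  contDiff := contDiff_const
  nonneg _ := le_rfl
  hasCompactSupport := .zero
  tsupport_subset := by simp [tsupport]

lemma add (hφ : IsSmoothDensityOn U φ) (hψ : IsSmoothDensityOn U ψ) :
    IsSmoothDensityOn U (φ + ψ) where
  contDiff := hφ.contDiff.add hψ.contDiff
  nonneg x := add_nonneg (hφ.nonneg x) (hψ.nonneg x)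
  hasCompactSupport := hφ.hasCompactSupport.add hψ.hasCompactSupport
  tsupport_subset := (tsupport_add φ ψ).trans (union_subset hφ.tsupport_subset hψ.tsupport_subset)

lemma const_smul (hφ : IsSmoothDensityOn U φ) {c : ℝ} (hc : 0 ≤ c) :
    IsSmoothDensityOn U (c • φ) where
  contDiff := contDiff_const.smul hφ.contDiff
  nonneg x := mul_nonneg hc (hφ.nonneg x)
  hasCompactSupport := hφ.hasCompactSupport.smul_left (f := fun _ => c)
  tsupport_subset := (tsupport_smul_subset_right (fun _ => c) φ).trans hφ.tsupport_subset

lemma continuous_smul (hφ : IsSmoothDensityOn U φ) (hU : IsOpen U) (hf : ContinuousOn f U) :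
    Continuous fun x => φ x • f x :=
  (hφ.contDiff.continuous.continuousOn.smul hf).continuous_of_tsupport_subset hU
    ((tsupport_smul_subset_left φ f).trans hφ.tsupport_subset)

lemma integrable_smul [MeasurableSpace G] [OpensMeasurableSpace G] {ν : Measure G}
    [IsFiniteMeasureOnCompacts ν] (hφ : IsSmoothDensityOn U φ) (hU : IsOpen U)
    (hf : ContinuousOn f U) : Integrable (fun x => φ x • f x) ν :=
  (hφ.continuous_smul hU hf).integrable_of_hasCompactSupport hφ.hasCompactSupport.smul_right

end IsSmoothDensityOn

lemma exists_isSmoothDensityOn_apply_eq_one [FiniteDimensional ℝ G] {x : G} (hU : U ∈ 𝓝 x) :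
    ∃ φ : G → ℝ, IsSmoothDensityOn U φ ∧ φ x = 1 := by
  obtain ⟨φ, hsupp, hcomp, hsmooth, hrange, hx⟩ := exists_contDiff_tsupport_subset (n := ⊤) hU
  exact ⟨φ, ⟨hsmooth, fun y => (hrange (mem_range_self y)).1, hcomp, hsupp⟩, hx⟩

variable [MeasurableSpace G] [OpensMeasurableSpace G] (ν : Measure G) [IsFiniteMeasureOnCompacts ν]

/-- The convex cone of all moments `∫ φ • f ∂ν` of `f` against smooth densities `φ` on `U`. -/
def momentCone (hU : IsOpen U) (hf : ContinuousOn f U) : PointedCone ℝ E where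
  carrier := {w | ∃ φ, IsSmoothDensityOn U φ ∧ ∫ x, φ x • f x ∂ν = w}
  zero_mem' := ⟨0, .zero, by simp⟩
  add_mem' := by
    rintro _ _ ⟨φ, hφ, rfl⟩ ⟨ψ, hψ, rfl⟩
    refine ⟨φ + ψ, hφ.add hψ, ?_⟩
    simp only [Pi.add_apply, add_smul]
    exact integral_add (hφ.integrable_smul hU hf) (hψ.integrable_smul hU hf)
  smul_mem' := by
    rintro ⟨c, hc⟩ _ ⟨φ, hφ, rfl⟩
    refine ⟨c • φ, hφ.const_smul hc, ?_⟩
    simp only [Pi.smul_apply, smul_assoc]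
    exact integral_smul c _

variable {ν} [ν.IsOpenPosMeasure] [FiniteDimensional ℝ G]

lemma nonneg_of_forall_integral_smul_nonneg {g : G → ℝ} (hU : IsOpen U) (hg : ContinuousOn g U)
    (h : ∀ φ, IsSmoothDensityOn U φ → 0 ≤ ∫ x, φ x • g x ∂ν) {x : G} (hx : x ∈ U) :
    0 ≤ g x := by
  by_contra! hneg
  have hV : IsOpen (U ∩ g ⁻¹' Iio 0) := hg.isOpen_inter_preimage hU isOpen_Iio
  obtain ⟨φ, hφ, hφx⟩ := exists_isSmoothDensityOn_apply_eq_one (hV.mem_nhds ⟨hx, hneg⟩)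
  have hφg : ∀ y, φ y * g y ≤ 0 := fun y => by
    by_cases hy : y ∈ tsupport φ
    · exact mul_nonpos_of_nonneg_of_nonpos (hφ.nonneg y) (hφ.tsupport_subset hy).2.le
    · simp [image_eq_zero_of_notMem_tsupport hy]
  have hpos : 0 < ∫ y, -(φ y • g y) ∂ν :=
    (hφ.continuous_smul hV (hg.mono inter_subset_left)).neg
      |>.integral_pos_of_hasCompactSupport_nonneg_nonzero (x := x)
        hφ.hasCompactSupport.smul_right.neg (fun y => neg_nonneg.2 (hφg y))
        (by simpa [hφx] using hneg.ne)
  rw [integral_neg, neg_pos] at hpos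
  exact hpos.not_ge (h φ { hφ with tsupport_subset := hφ.tsupport_subset.trans inter_subset_left })

theorem exists_isSmoothDensityOn_integral_smul_eq [FiniteDimensional ℝ E] (hU : IsOpen U)
    (hf : ContinuousOn f U) {u : E}
    (hu : ∀ ℓ : E →L[ℝ] ℝ, ℓ ≠ 0 → (∀ x ∈ U, 0 ≤ ℓ (f x)) → 0 < ℓ u) :
    ∃ φ, IsSmoothDensityOn U φ ∧ ∫ x, φ x • f x ∂ν = u := by
  suffices u ∈ momentCone ν hU hf from this
  by_contra hmem
  obtain ⟨ℓ, hℓ, hcone, hle⟩ := exists_dual_nonneg_of_notMem_pointedCone hmem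
  refine (hu ℓ hℓ fun x hx => ?_).not_ge hle
  refine nonneg_of_forall_integral_smul_nonneg (ν := ν) hU (ℓ.continuous.comp_continuousOn hf)
    (fun φ hφ => ?_) hx
  calc 0 ≤ ℓ (∫ x, φ x • f x ∂ν) := hcone _ ⟨φ, hφ, rfl⟩
    _ = ∫ x, φ x • ℓ (f x) ∂ν := by
      simp only [← ℓ.integral_comp_comm (hφ.integrable_smul hU hf), map_smul]

end Density

section Stretch

variable {h : ℝ → ℝ}

/-- The height at which the flow with excess density `h` reaches the velocity `v`; its derivative
is `1 + h`, and its inverse is the shear profile. -/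
noncomputable def stretch (h : ℝ → ℝ) (v : ℝ) : ℝ := v + ∫ t in (0 : ℝ)..v, h t

lemma stretch_zero : stretch h 0 = 0 := by simp [stretch]

lemma hasDerivAt_stretch (hc : Continuous h) (v : ℝ) : HasDerivAt (stretch h) (1 + h v) v :=
  (hasDerivAt_id v).add (hc.integral_hasStrictDerivAt 0 v).hasDerivAt

lemma contDiff_stretch (hs : ContDiff ℝ ∞ h) : ContDiff ℝ ∞ (stretch h) := by
  have hderiv := hasDerivAt_stretch hs.continuous
  rw [contDiff_infty_iff_deriv, funext fun v => (hderiv v).deriv]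
  exact ⟨fun v => (hderiv v).differentiableAt, contDiff_const.add hs⟩

lemma one_add_pos (h0 : ∀ v, 0 ≤ h v) (v : ℝ) : 0 < 1 + h v := by linarith [h0 v]

lemma strictMono_stretch (hc : Continuous h) (h0 : ∀ v, 0 ≤ h v) : StrictMono (stretch h) :=
  strictMono_of_hasDerivAt_pos (hasDerivAt_stretch hc) (one_add_pos h0)

lemma surjective_stretch (hc : Continuous h) (h0 : ∀ v, 0 ≤ h v) :
    Function.Surjective (stretch h) := by
  have hcont : Continuous (stretch h) :=
    continuous_iff_continuousAt.2 fun v => (hasDerivAt_stretch hc v).continuousAt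
  refine hcont.surjective (tendsto_atTop_mono' _ ?_ tendsto_id)
    (tendsto_atBot_mono' _ ?_ tendsto_id)
  · filter_upwards [eventually_ge_atTop 0] with v hv
    exact le_add_of_nonneg_right (intervalIntegral.integral_nonneg hv fun t _ => h0 t)
  · filter_upwards [eventually_le_atBot 0] with v hv
    refine add_le_of_nonpos_right ?_
    rw [intervalIntegral.integral_symm, neg_nonpos]
    exact intervalIntegral.integral_nonneg hv fun t _ => h0 t

lemma eventually_stretch_sub_self_eq (hsupp : HasCompactSupport h) :
    ∀ᶠ v in atTop, stretch h v - v = ∫ t in Ioi 0, h t := by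
  obtain ⟨R, hR⟩ := hsupp.isCompact.bddAbove
  filter_upwards [eventually_ge_atTop 0, eventually_ge_atTop R] with v hv hRv
  rw [stretch, add_sub_cancel_left, intervalIntegral.integral_of_le hv]
  refine (setIntegral_eq_of_subset_of_forall_sdiff_eq_zero measurableSet_Ioi Ioc_subset_Ioi_self
    fun t ht => ?_).symm
  exact image_eq_zero_of_notMem_tsupport fun hmem => ht.2 ⟨ht.1, (hR hmem).trans hRv⟩

/-- `stretch h` as an automorphism of the ordered line. The shear profile is its inverse, defined on
all of `ℝ` although only its values on `[0, ∞)` matter. -/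
noncomputable def stretchIso (hc : Continuous h) (h0 : ∀ v, 0 ≤ h v) : ℝ ≃o ℝ :=
  (strictMono_stretch hc h0).orderIsoOfSurjective _ (surjective_stretch hc h0)

variable (hc : Continuous h) (h0 : ∀ v, 0 ≤ h v)

lemma stretchIso_apply (v : ℝ) : stretchIso hc h0 v = stretch h v := rfl

lemma stretchIso_symm_zero : (stretchIso hc h0).symm 0 = 0 := by
  rw [OrderIso.symm_apply_eq, stretchIso_apply, stretch_zero]

lemma contDiff_stretchIso_symm (hs : ContDiff ℝ ∞ h) :
    ContDiff ℝ ∞ (stretchIso hs.continuous h0).symm :=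
  (stretchIso hs.continuous h0).toHomeomorph.contDiff_symm_deriv (fun v => (one_add_pos h0 v).ne')
    (hasDerivAt_stretch hs.continuous) (contDiff_stretch hs)

lemma hasDerivAt_stretchIso_symm (z : ℝ) :
    HasDerivAt (stretchIso hc h0).symm (1 + h ((stretchIso hc h0).symm z))⁻¹ z :=
  (hasDerivAt_stretch hc _).of_local_left_inverse (stretchIso hc h0).symm.continuous.continuousAt
    (one_add_pos h0 _).ne' (.of_forall (stretchIso hc h0).apply_symm_apply)

lemma deriv_stretchIso_symm_pos (z : ℝ) : 0 < deriv (stretchIso hc h0).symm z := by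
  rw [(hasDerivAt_stretchIso_symm hc h0 z).deriv]
  exact inv_pos.2 (one_add_pos h0 _)

lemma eventually_stretchIso_symm_sub_self_eq (hsupp : HasCompactSupport h) :
    ∀ᶠ z in atTop, (stretchIso hc h0).symm z - z = -∫ t in Ioi 0, h t := by
  filter_upwards [(stretchIso hc h0).symm.tendsto_atTop.eventually
    (eventually_stretch_sub_self_eq hsupp)] with z hz
  rw [← stretchIso_apply hc h0, OrderIso.apply_symm_apply] at hz
  rw [← hz, neg_sub]

lemma stretchIso_image_Ioi_zero : stretchIso hc h0 '' Ioi 0 = Ioi 0 := by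
  rw [OrderIso.image_Ioi, stretchIso_apply, stretch_zero]

lemma setIntegral_image_comp_stretchIso_symm {E : Type*} [NormedAddCommGroup E] [NormedSpace ℝ E]
    {s : Set ℝ} (hs : MeasurableSet s) (g : ℝ → E) :
    ∫ y in stretchIso hc h0 '' s, g ((stretchIso hc h0).symm y) =
      ∫ v in s, (1 + h v) • g v := by
  have hderiv : ∀ v ∈ s, HasDerivWithinAt (stretchIso hc h0) (1 + h v) s v :=
    fun v _ => (hasDerivAt_stretch hc v).hasDerivWithinAt
  rw [integral_image_eq_integral_abs_deriv_smul hs hderiv (stretchIso hc h0).injective.injOn]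
  simp only [OrderIso.symm_apply_apply, abs_of_pos (one_add_pos h0 _)]

end Stretch

section EventuallyConst

lemma eventually_iteratedDeriv_eq_zero_of_eventually_eq_const {E : Type*} [NormedAddCommGroup E]
    [NormedSpace ℝ E] {F : ℝ → E} {A : E} (hF : ∀ᶠ z in atTop, F z = A) {n : ℕ} (hn : n ≠ 0) :
    ∀ᶠ z in atTop, iteratedDeriv n F z = 0 := by
  obtain ⟨R, hR⟩ := eventually_atTop.1 hF
  filter_upwards [eventually_gt_atTop R] with z hz
  have hlocal : F =ᶠ[𝓝 z] fun _ => A := (eventually_gt_nhds hz).mono fun w hw => hR w hw.le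
  rw [hlocal.iteratedDeriv_eq n, iteratedDeriv_const, if_neg hn]

lemma tendsto_mul_zero_of_eventually_eq_zero {α R : Type*} [MulZeroClass R] [TopologicalSpace R]
    {l : Filter α} {F : α → R} (k : α → R) (hF : ∀ᶠ z in l, F z = 0) :
    Tendsto (fun z => k z * F z) l (𝓝 0) :=
  tendsto_const_nhds.congr' (hF.mono fun z hz => by simp only [hz, mul_zero])

end EventuallyConst

section Resolvent

variable {μ : ℂ}

lemma sub_ofReal_ne_zero (him : μ.im ≠ 0) (v : ℝ) : μ - (v : ℂ) ≠ 0 := fun h =>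
  him (by simpa using congrArg Complex.im h)

lemma continuous_inv_sub_ofReal_sq (him : μ.im ≠ 0) :
    Continuous fun v : ℝ => ((μ - (v : ℂ)) ^ 2)⁻¹ :=
  Continuous.inv₀ (by fun_prop) fun v => pow_ne_zero 2 (sub_ofReal_ne_zero him v)

lemma integrable_inv_sub_ofReal_sq (him : μ.im ≠ 0) :
    Integrable fun v : ℝ => ((μ - (v : ℂ)) ^ 2)⁻¹ := by
  have hdom := ((integrable_inv_one_add_sq.comp_div him).comp_sub_right μ.re).const_mul
    (μ.im ^ 2)⁻¹
  refine hdom.mono' (continuous_inv_sub_ofReal_sq him).aestronglyMeasurable (.of_forall fun v => ?_)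
  rw [norm_inv, norm_pow, Complex.sq_norm, Complex.normSq_apply, ← mul_inv]
  refine le_of_eq (congrArg _ ?_)
  simp only [Complex.sub_re, Complex.sub_im, Complex.ofReal_re, Complex.ofReal_im]
  field_simp
  ring

lemma hasDerivAt_inv_sub_ofReal (him : μ.im ≠ 0) (v : ℝ) :
    HasDerivAt (fun v : ℝ => (μ - (v : ℂ))⁻¹) ((μ - (v : ℂ)) ^ 2)⁻¹ v := by
  simpa using ((hasDerivAt_id v).ofReal_comp.const_sub μ).fun_inv (sub_ofReal_ne_zero him v)

lemma tendsto_inv_sub_ofReal_atTop (μ : ℂ) :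
    Tendsto (fun v : ℝ => (μ - (v : ℂ))⁻¹) atTop (𝓝 0) :=
  tendsto_inv₀_cobounded.comp
    ((tendsto_const_sub_cobounded μ).comp (RCLike.tendsto_ofReal_atTop_cobounded ℂ))

lemma integral_Ioi_inv_sub_ofReal_sq (him : μ.im ≠ 0) :
    ∫ v in Ioi (0 : ℝ), ((μ - (v : ℂ)) ^ 2)⁻¹ = -μ⁻¹ := by
  rw [integral_Ioi_of_hasDerivAt_of_tendsto' (fun v _ => hasDerivAt_inv_sub_ofReal him v)
    (integrable_inv_sub_ofReal_sq him).integrableOn (tendsto_inv_sub_ofReal_atTop μ)]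
  simp

lemma dual_apply_eq (ℓ : ℂ →L[ℝ] ℝ) (w : ℂ) : ℓ w = w.re * ℓ 1 + w.im * ℓ Complex.I := by
  have hw : w = w.re • (1 : ℂ) + w.im • Complex.I := by simp [Complex.re_add_im]
  conv_lhs => rw [hw, map_add, map_smul, map_smul, smul_eq_mul, smul_eq_mul]

lemma dual_apply_inv (ℓ : ℂ →L[ℝ] ℝ) (w : ℂ) :
    ℓ w⁻¹ = (w.re * ℓ 1 - w.im * ℓ Complex.I) / Complex.normSq w := by
  rw [dual_apply_eq, Complex.inv_re, Complex.inv_im]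
  ring

lemma mul_sub_mul_pos_of_forall_quadratic_nonneg {a b p q : ℝ} (ha : 0 < a) (hb : b ≠ 0)
    (hpq : p = 0 → q ≠ 0)
    (h : ∀ v > 0, 0 ≤ ((a - v) ^ 2 - b ^ 2) * p - 2 * (a - v) * b * q) : 0 < a * p - b * q := by
  by_contra! hle
  have hsmall : a * (b * q) ≤ (a ^ 2 / 4 - b ^ 2) * p := by
    linarith [h (a / 2) (by positivity)]
  have hlarge : 0 ≤ ((a + 2 * b ^ 2 / a) ^ 2 - b ^ 2) * p + 2 * (a + 2 * b ^ 2 / a) * (b * q) := by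
    have hv : a - 2 * (a ^ 2 + b ^ 2) / a = -(a + 2 * b ^ 2 / a) := by field_simp; ring
    have hval := h (2 * (a ^ 2 + b ^ 2) / a) (by positivity)
    rw [hv] at hval
    linarith
  have hp_nonpos : p ≤ 0 := by
    have hmul : (3 * a ^ 2 / 4 + b ^ 2) * p ≤ 0 := by
      linarith [mul_le_mul_of_nonneg_left hle ha.le]
    exact nonpos_of_mul_nonpos_right hmul (by positivity)
  have hp_nonneg : 0 ≤ p := by
    have hmul : 0 ≤ (3 * a ^ 3 / 2 + 2 * a * b ^ 2) * p :=
      calc 0 ≤ a * (((a + 2 * b ^ 2 / a) ^ 2 - b ^ 2) * p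
              + 2 * (a + 2 * b ^ 2 / a) * (b * q)) := mul_nonneg ha.le hlarge
        _ = a * ((a + 2 * b ^ 2 / a) ^ 2 - b ^ 2) * p
              + 2 * (a + 2 * b ^ 2 / a) * (a * (b * q)) := by ring
        _ ≤ a * ((a + 2 * b ^ 2 / a) ^ 2 - b ^ 2) * p
              + 2 * (a + 2 * b ^ 2 / a) * ((a ^ 2 / 4 - b ^ 2) * p) := by gcongr
        _ = (3 * a ^ 3 / 2 + 2 * a * b ^ 2) * p := by field_simp; ring
    exact nonneg_of_mul_nonneg_right hmul (by positivity)
  have hp : p = 0 := hp_nonpos.antisymm hp_nonneg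
  have hbq : b * q = 0 := by
    rw [hp, mul_zero] at hsmall hle
    exact (nonpos_of_mul_nonpos_right hsmall ha).antisymm (by linarith)
  exact hpq hp ((mul_eq_zero.1 hbq).resolve_left hb)

theorem dual_inv_pos_of_forall_inv_sub_ofReal_sq_nonneg (hre : 0 < μ.re) (him : μ.im ≠ 0)
    {ℓ : ℂ →L[ℝ] ℝ} (hℓ : ℓ ≠ 0) (h : ∀ v : ℝ, 0 < v → 0 ≤ ℓ ((μ - (v : ℂ)) ^ 2)⁻¹) :
    0 < ℓ μ⁻¹ := by
  have hμ : μ ≠ 0 := fun h0 => him (by simp [h0])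
  have hcoeff : ℓ 1 = 0 → ℓ Complex.I ≠ 0 := fun h1 hI =>
    hℓ (ContinuousLinearMap.ext fun w => by simp [dual_apply_eq ℓ w, h1, hI])
  rw [dual_apply_inv]
  refine div_pos (mul_sub_mul_pos_of_forall_quadratic_nonneg hre him hcoeff fun v hv => ?_)
    (Complex.normSq_pos.2 hμ)
  have hsq := h v hv
  have hnorm := Complex.normSq_pos.2 (pow_ne_zero 2 (sub_ofReal_ne_zero him v))
  rw [dual_apply_inv, le_div_iff₀ hnorm, zero_mul] at hsq
  have hre_sq : ((μ - (v : ℂ)) ^ 2).re = (μ.re - v) ^ 2 - μ.im ^ 2 := by simp [sq]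
  have him_sq : ((μ - (v : ℂ)) ^ 2).im = 2 * (μ.re - v) * μ.im := by simp [sq]; ring
  rwa [hre_sq, him_sq] at hsq

theorem exists_isSmoothDensityOn_integral_inv_sub_sq_eq_inv (hre : 0 < μ.re) (him : μ.im ≠ 0) :
    ∃ h, IsSmoothDensityOn (Ioi (0 : ℝ)) h ∧
      ∫ v : ℝ, h v • ((μ - (v : ℂ)) ^ 2)⁻¹ = μ⁻¹ :=
  exists_isSmoothDensityOn_integral_smul_eq isOpen_Ioi
    (continuous_inv_sub_ofReal_sq him).continuousOn
    fun _ => dual_inv_pos_of_forall_inv_sub_ofReal_sq_nonneg hre him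

end Resolvent

theorem integral_Ioi_inv_sub_stretchIso_symm_sq {μ : ℂ} (him : μ.im ≠ 0) {h : ℝ → ℝ}
    (hh : IsSmoothDensityOn (Ioi (0 : ℝ)) h) :
    ∫ y in Ioi (0 : ℝ),
        ((μ - ((stretchIso hh.contDiff.continuous hh.nonneg).symm y : ℂ)) ^ 2)⁻¹ =
      -μ⁻¹ + ∫ v : ℝ, h v • ((μ - (v : ℂ)) ^ 2)⁻¹ := by
  have hsupp : ∀ v ∉ Ioi (0 : ℝ), h v • ((μ - (v : ℂ)) ^ 2)⁻¹ = 0 := fun v hv => by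
    rw [image_eq_zero_of_notMem_tsupport fun hmem => hv (hh.tsupport_subset hmem), zero_smul]
  have hInt : Integrable fun v : ℝ => h v • ((μ - (v : ℂ)) ^ 2)⁻¹ :=
    hh.integrable_smul isOpen_Ioi (continuous_inv_sub_ofReal_sq him).continuousOn
  have hsubst := setIntegral_image_comp_stretchIso_symm hh.contDiff.continuous hh.nonneg
    (measurableSet_Ioi (a := (0 : ℝ))) fun v : ℝ => ((μ - (v : ℂ)) ^ 2)⁻¹
  rw [stretchIso_image_Ioi_zero] at hsubst
  rw [hsubst]
  simp only [add_smul, one_smul]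
  rw [integral_add (integrable_inv_sub_ofReal_sq him).integrableOn hInt.integrableOn,
    integral_Ioi_inv_sub_ofReal_sq him, setIntegral_eq_integral_of_forall_compl_eq_zero hsupp]

theorem exists_shear_flow_with_eigenvalue_general
    (μ : ℂ) (hre : 0 < μ.re) (him : μ.im ≠ 0) :
    ∃ (Vs : ℝ → ℝ) (As : ℝ),
      ContDiff ℝ (⊤ : ℕ∞) Vs ∧ Vs 0 = 0 ∧ (∀ z : ℝ, 0 ≤ z → 0 < deriv Vs z) ∧
      (∀ p : ℕ, Tendsto (fun z : ℝ => z ^ p * (Vs z - z - As)) atTop (nhds 0)) ∧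
      (∀ n : ℕ, 1 ≤ n → ∀ p : ℕ,
        Tendsto (fun z : ℝ => z ^ p * iteratedDeriv n (fun w => Vs w - w) z)
          atTop (nhds 0)) ∧
      μ * ∫ y in Set.Ioi (0 : ℝ), ((μ - (Vs y : ℂ)) ^ 2)⁻¹ = 0 := by
  obtain ⟨h, hh, hInt⟩ := exists_isSmoothDensityOn_integral_inv_sub_sq_eq_inv hre him
  have hc := hh.contDiff.continuous
  have hconst := eventually_stretchIso_symm_sub_self_eq hc hh.nonneg hh.hasCompactSupport
  refine ⟨(stretchIso hc hh.nonneg).symm, -∫ t in Ioi 0, h t,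
    contDiff_stretchIso_symm hh.nonneg hh.contDiff, stretchIso_symm_zero hc hh.nonneg,
    fun z _ => deriv_stretchIso_symm_pos hc hh.nonneg z, fun p => ?_, fun n hn p => ?_, ?_⟩
  · exact tendsto_mul_zero_of_eventually_eq_zero (· ^ p) (hconst.mono fun z => sub_eq_zero.2)
  · exact tendsto_mul_zero_of_eventually_eq_zero (· ^ p)
      (eventually_iteratedDeriv_eq_zero_of_eventually_eq_const hconst (by lia))
  · rw [integral_Ioi_inv_sub_stretchIso_symm_sq him hh, hInt, neg_add_cancel, mul_zero]

/-- every `μ` in the open first quadrant is an infinite-frequency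
eigenvalue for some admissible shear flow `V_s`. -/
theorem exists_shear_flow_with_eigenvalue
    (μ : ℂ) (hre : 0 < μ.re) (him : 0 < μ.im) :
    ∃ (Vs : ℝ → ℝ) (As : ℝ),
      ContDiff ℝ (⊤ : ℕ∞) Vs ∧ Vs 0 = 0 ∧ (∀ z : ℝ, 0 ≤ z → 0 < deriv Vs z) ∧
      (∀ p : ℕ, Tendsto (fun z : ℝ => z ^ p * (Vs z - z - As)) atTop (nhds 0)) ∧
      (∀ n : ℕ, 1 ≤ n → ∀ p : ℕ,
        Tendsto (fun z : ℝ => z ^ p * iteratedDeriv n (fun w => Vs w - w) z)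
          atTop (nhds 0)) ∧
      μ * ∫ y in Set.Ioi (0 : ℝ), ((μ - (Vs y : ℂ)) ^ 2)⁻¹ = 0 :=
  exists_shear_flow_with_eigenvalue_general μ hre him.ne'
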